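/- arXiv:2310.00292 — 2 statements merged into one kernel-verified Lean document; each statement's English description precedes it below -/
import Mathlib

section
/- Let μ = μ₁ × ⋯ × μ_n ∈ 𝒲(ℝⁿ) be a PS measure, where μ_i = f_i·L¹ with each f_i continuous on ℝ and f_i > 0 everywhere (so μ has density f(x₁,…,x_n) = f₁(x₁)⋯f_n(x_n)). Then each f_i is symmetric: for every i = 1,…,n there exists m_i ∈ ℝ such that f_i(m_i − t) = f_i(m_i + t) for all t ∈ ℝ. -/
/-!
The half-space `{c ≤ xᵢ}` has weighted perimeter `Fᵢ(c) · Cᵢ`, where `Cᵢ` is the product of the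
total masses of the other factors, and so has its complement `{xᵢ < c}`. On every fibre parallel to
`eᵢ` the weight is a multiple of `Fᵢ`, so symmetrizing `{xᵢ < c}` in the direction `eᵢ` yields
`{d ≤ xᵢ}`, where `∫_{[d,∞)} Fᵢ = ∫_{(-∞,c)} Fᵢ`. The PS property therefore says `Fᵢ(d) ≤ Fᵢ(c)`.
The relation between `c` and `d` is symmetric, so `Fᵢ(d) = Fᵢ(c)`.

Writing `d = T(c)`, the map `T` is a decreasing involution, and differentiating the mass balance
gives `T'(c) = -Fᵢ(c) / Fᵢ(T(c)) = -1`. Hence `T(c) = 2m - c` for some `m`, and `Fᵢ ∘ T = Fᵢ` is the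
claimed symmetry.

The perimeter of a half-space is computed without traces. Multiplying a test field by smooth
approximations of the indicator of `{c ≤ xᵢ}` and using the weak gradient identity expresses the
pairing as a limit of integrals of `f φᵢ` against densities in `xᵢ` concentrating at `c`; the
product structure of `f` and the continuity of `Fᵢ` give the limit.
-/

open MeasureTheory Set Filter
open scoped ENNReal RealInnerProductSpace Topology

noncomputable section

/-- Euclidean space ℝⁿ. -/
abbrev En (n : ℕ) := EuclideanSpace ℝ (Fin n)

/-- Divergence of a vector field on ℝⁿ. -/
noncomputable def dvg {n : ℕ} (φ : En n → En n) (x : En n) : ℝ :=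
  ∑ i : Fin n, fderiv ℝ φ x (EuclideanSpace.single i 1) i

/-- `f'` is the (weak) gradient of `f`, and both are locally integrable;
this encodes `f ∈ W^{1,1}_loc(ℝⁿ)` with weak gradient `∇f = f'`. -/
def HasWeakGrad {n : ℕ} (f : En n → ℝ) (f' : En n → En n) : Prop :=
  LocallyIntegrable f volume ∧ LocallyIntegrable f' volume ∧
    ∀ φ : En n → En n, ContDiff ℝ 1 φ → HasCompactSupport φ →
      (∫ x, f x * dvg φ x) = - ∫ x, ⟪φ x, f' x⟫

/-- Membership of `μ = f·Lⁿ` in the class `𝒲(ℝⁿ)`: the density `f` is non-negative,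
integrable and lies in `W^{1,1}_loc(ℝⁿ)` with weak gradient `f'`. -/
def MemW {n : ℕ} (f : En n → ℝ) (f' : En n → En n) : Prop :=
  (∀ x, 0 ≤ f x) ∧ Integrable f volume ∧ HasWeakGrad f f'

/-- Admissible test vector fields: `C¹`, compactly supported in `U`, sup-norm at most 1. -/
def IsTestField {n : ℕ} (U : Set (En n)) (φ : En n → En n) : Prop :=
  ContDiff ℝ 1 φ ∧ HasCompactSupport φ ∧ tsupport φ ⊆ U ∧ ∀ x, ‖φ x‖ ≤ 1

/-- The weighted variation `‖g‖_{BV_μ(U)}` (valued in `ℝ≥0∞`;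
membership in `BV_μ(U)` means that this quantity is finite). -/
noncomputable def bvVar {n : ℕ} (f : En n → ℝ) (f' : En n → En n) (U : Set (En n))
    (g : En n → ℝ) : ℝ≥0∞ :=
  ⨆ (φ : En n → En n) (_ : IsTestField U φ),
    ENNReal.ofReal (∫ x in U, g x * (f x * dvg φ x + ⟪φ x, f' x⟫))

/-- The weighted perimeter `Per_μ(E; U)`. -/
noncomputable def perim {n : ℕ} (f : En n → ℝ) (f' : En n → En n) (U : Set (En n))
    (E : Set (En n)) : ℝ≥0∞ :=
  bvVar f f' U (E.indicator fun _ => (1 : ℝ))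

/-- The measure `μ = f·Lⁿ`. -/
noncomputable def muM {n : ℕ} (f : En n → ℝ) : Measure (En n) :=
  volume.withDensity fun x => ENNReal.ofReal (f x)

/-- One-dimensional generalized Ehrhard symmetrization of `A ⊆ ℝ` in direction `v ∈ {−1,+1}`
with respect to a measure `ν` on `ℝ`: the largest half-line `{t : v·t ≥ c}` of `ν`-measure
`ν A` (with the conventions `∅`, `ℝ` when `c = ±∞`). -/
def ehrhard1D (ν : Measure ℝ) (v : ℝ) (A : Set ℝ) : Set ℝ :=
  {t | ∀ b : ℝ, (∀ c : ℝ, ν {y | c ≤ v * y} ≤ ν A → b ≤ c) → b ≤ v * t}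

/-- The weighted measure `f·H¹` on the fiber `{x + t·v : t ∈ ℝ}`, identified with `ℝ`. -/
noncomputable def fiberMeasure {n : ℕ} (f : En n → ℝ) (x v : En n) : Measure ℝ :=
  (volume : Measure ℝ).withDensity fun t => ENNReal.ofReal (f (x + t • v))

/-- Generalized `v`-Ehrhard symmetrization of `E ⊆ ℝⁿ` with respect to `μ = f·Lⁿ`:
on each fiber over `v^⊥` one replaces `E` by the largest half-line in direction `v`
of the same weighted measure. -/
def ehrhardSymm {n : ℕ} (f : En n → ℝ) (v : En n) (E : Set (En n)) : Set (En n) :=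
  {z | ⟪z, v⟫ ∈
      ehrhard1D (fiberMeasure f (z - ⟪z, v⟫ • v) v) 1
        {t | (z - ⟪z, v⟫ • v) + t • v ∈ E}}

/-- `μ = f·Lⁿ` is a perimeter symmetrization (PS) measure: generalized Ehrhard
symmetrization does not increase the weighted perimeter of sets of finite `μ`-perimeter. -/
def IsPSMeasure {n : ℕ} (f : En n → ℝ) (f' : En n → En n) : Prop :=
  ∀ v : En n, ‖v‖ = 1 → ∀ E : Set (En n), NullMeasurableSet E volume →
    perim f f' univ E < ⊤ →
      perim f f' univ (ehrhardSymm f v E) ≤ perim f f' univ E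

/-- The half-space `H(v, r) = {x : x·v ≥ r}`. -/
def halfSpace {n : ℕ} (v : En n) (r : ℝ) : Set (En n) := {x | r ≤ ⟪x, v⟫}

/-- `H_μ(E, v)`: the largest half-space in direction `v` with `μ`-measure `μ(E)`. -/
def halfSpaceOf {n : ℕ} (f : En n → ℝ) (E : Set (En n)) (v : En n) : Set (En n) :=
  {x | ∀ b : ℝ, (∀ c : ℝ, muM f (halfSpace v c) ≤ muM f E → b ≤ c) → b ≤ ⟪x, v⟫}

/-- `g'` is the weak derivative of `g : ℝ → ℝ` (so `g ∈ W^{1,1}_loc(ℝ)`). -/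
def HasWeakDeriv (g g' : ℝ → ℝ) : Prop :=
  LocallyIntegrable g volume ∧ LocallyIntegrable g' volume ∧
    ∀ φ : ℝ → ℝ, ContDiff ℝ 1 φ → HasCompactSupport φ →
      (∫ t, g t * deriv φ t) = - ∫ t, φ t * g' t

/-! ### Tails of a density on the line -/

section Tails

theorem integral_pos_of_pos {α : Type*} [MeasurableSpace α] {μ : Measure α} {f : α → ℝ}
    (hf : Integrable f μ) (hpos : ∀ x, 0 < f x) (hμ : μ ≠ 0) : 0 < ∫ x, f x ∂μ := by
  rw [integral_pos_iff_support_of_nonneg (fun x => (hpos x).le) hf,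
    Function.support_eq_univ fun x => (hpos x).ne']
  exact Measure.measure_univ_pos.2 hμ

variable {F : ℝ → ℝ}

theorem hasDerivAt_integral_Ici (hc : Continuous F) (hF : Integrable F) (x : ℝ) :
    HasDerivAt (fun y => ∫ t in Ici y, F t) (-F x) x := by
  have hsplit : (fun y => ∫ t in Ici y, F t) = fun y => (∫ t in Ici x, F t) - ∫ t in x..y, F t := by
    ext y
    rw [← intervalIntegral.integral_Ici_sub_Ici' hF.integrableOn hF.integrableOn, sub_sub_cancel]
  rw [hsplit]
  exact (hc.integral_hasStrictDerivAt x x).hasDerivAt.const_sub _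

theorem continuous_integral_Ici (hc : Continuous F) (hF : Integrable F) :
    Continuous fun x => ∫ t in Ici x, F t :=
  continuous_iff_continuousAt.2 fun x => (hasDerivAt_integral_Ici hc hF x).continuousAt

theorem strictAnti_integral_Ici (hF : Integrable F) (hpos : ∀ t, 0 < F t) :
    StrictAnti fun x => ∫ t in Ici x, F t := fun a b hab => by
  rw [← sub_pos, intervalIntegral.integral_Ici_sub_Ici hF.integrableOn hab.le]
  exact integral_pos_of_pos hF.integrableOn hpos (by simpa using hab)

theorem integral_Iio_eq_sub_integral_Ici (hF : Integrable F) (x : ℝ) :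
    ∫ t in Iio x, F t = (∫ t, F t) - ∫ t in Ici x, F t :=
  eq_sub_of_add_eq (intervalIntegral.integral_Iio_add_Ici hF.integrableOn hF.integrableOn)

theorem integral_Ici_eq_integral_Iio_comm (hF : Integrable F) {c d : ℝ} :
    ∫ t in Ici d, F t = ∫ t in Iio c, F t ↔ ∫ t in Ici c, F t = ∫ t in Iio d, F t := by
  rw [integral_Iio_eq_sub_integral_Ici hF, integral_Iio_eq_sub_integral_Ici hF,
    eq_sub_iff_add_eq, eq_sub_iff_add_eq, add_comm]

theorem exists_integral_Ici_eq_integral_Iio (hc : Continuous F) (hF : Integrable F)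
    (hpos : ∀ t, 0 < F t) (c : ℝ) : ∃ d, ∫ t in Ici d, F t = ∫ t in Iio c, F t := by
  have htop : Tendsto (fun x => ∫ t in Ici x, F t) atTop (𝓝 0) :=
    tendsto_integral_Ici_zero tendsto_id
  have hbot : Tendsto (fun x => ∫ t in Ici x, F t) atBot (𝓝 (∫ t, F t)) :=
    (aecover_Ici tendsto_id).integral_tendsto_of_countably_generated hF
  have hlower : 0 < ∫ t in Iio c, F t :=
    integral_pos_of_pos hF.integrableOn hpos (by simp)
  have hupper : ∫ t in Iio c, F t < ∫ t, F t := by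
    rw [integral_Iio_eq_sub_integral_Ici hF, sub_lt_self_iff]
    exact integral_pos_of_pos hF.integrableOn hpos (by simp)
  obtain ⟨a, ha⟩ := (htop.eventually (gt_mem_nhds hlower)).exists
  obtain ⟨b, hb⟩ := (hbot.eventually (lt_mem_nhds hupper)).exists
  exact mem_range_of_exists_le_of_exists_ge (continuous_integral_Ici hc hF)
    ⟨a, ha.le⟩ ⟨b, hb.le⟩

/-- `T` sends `c` to the endpoint `d` of the half-line `[d, ∞)` carrying as much of the density `F`
as `(-∞, c)`: it describes the symmetrization of left half-lines with respect to `F · L¹`. -/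
def SwapsTails (F T : ℝ → ℝ) : Prop :=
  ∀ c, ∫ t in Ici (T c), F t = ∫ t in Iio c, F t

namespace SwapsTails

variable {T : ℝ → ℝ}

theorem involutive (hT : SwapsTails F T) (hF : Integrable F) (hpos : ∀ t, 0 < F t) :
    Function.Involutive T := fun c =>
  (strictAnti_integral_Ici hF hpos).injective <|
    (hT (T c)).trans ((integral_Ici_eq_integral_Iio_comm hF).1 (hT c)).symm

theorem antitone (hT : SwapsTails F T) (hF : Integrable F) (hpos : ∀ t, 0 < F t) :
    Antitone T := fun a b hab => by
  have hanti := strictAnti_integral_Ici hF hpos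
  refine hanti.le_iff_ge.1 ?_
  simp only [hT _, integral_Iio_eq_sub_integral_Ici hF]
  exact sub_le_sub_left (hanti.antitone hab) _

theorem continuous (hT : SwapsTails F T) (hF : Integrable F) (hpos : ∀ t, 0 < F t) :
    Continuous T :=
  (hT.antitone hF hpos).dual_right.continuous_of_surjective (hT.involutive hF hpos).surjective

theorem hasDerivAt (hT : SwapsTails F T) (hc : Continuous F) (hF : Integrable F)
    (hpos : ∀ t, 0 < F t) (c : ℝ) : HasDerivAt T (-(F c / F (T c))) c := by
  have htail : HasDerivAt (fun c => ∫ t in Iio c, F t) (F c) c := by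
    simp only [integral_Iio_eq_sub_integral_Ici hF]
    simpa using (hasDerivAt_integral_Ici hc hF c).const_sub (∫ t, F t)
  have h := HasDerivAt.of_comp_left (hT.continuous hF hpos).continuousAt
    (hasDerivAt_integral_Ici hc hF (T c)) htail (neg_ne_zero.2 (hpos _).ne') (.of_forall hT)
  rwa [div_neg] at h

/-- The derivative `-F / (F ∘ T)` of `T` is constantly `-1` when `F ∘ T = F`. -/
theorem exists_eq_two_mul_sub (hT : SwapsTails F T) (hc : Continuous F) (hF : Integrable F)
    (hpos : ∀ t, 0 < F t) (hFT : ∀ c, F (T c) = F c) : ∃ m, ∀ c, T c = 2 * m - c := by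
  have hsum : ∀ c, HasDerivAt (fun c => T c + c) 0 c := fun c => by
    have h := (hT.hasDerivAt hc hF hpos c).add (hasDerivAt_id' c)
    rwa [hFT, div_self (hpos c).ne', neg_add_cancel] at h
  refine ⟨T 0 / 2, fun c => ?_⟩
  have hconst := is_const_of_deriv_eq_zero (fun x => (hsum x).differentiableAt)
    (fun x => (hsum x).deriv) c 0
  linarith

end SwapsTails

theorem exists_symmetric_of_tails (hc : Continuous F) (hF : Integrable F) (hpos : ∀ t, 0 < F t)
    (hle : ∀ c d, ∫ t in Ici d, F t = ∫ t in Iio c, F t → F d ≤ F c) :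
    ∃ m, ∀ t, F (m - t) = F (m + t) := by
  choose T hT using exists_integral_Ici_eq_integral_Iio hc hF hpos
  have hFT : ∀ c, F (T c) = F c := fun c =>
    (hle c (T c) (hT c)).antisymm (hle (T c) c ((integral_Ici_eq_integral_Iio_comm hF).1 (hT c)))
  obtain ⟨m, hm⟩ := SwapsTails.exists_eq_two_mul_sub hT hc hF hpos hFT
  refine ⟨m, fun t => ?_⟩
  rw [← hFT (m + t), hm]
  congr 1
  ring

end Tails

/-! ### Symmetrization of half-spaces -/

theorem ehrhard1D_one_eq_Ici {ν : Measure ℝ} {A : Set ℝ} {d : ℝ}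
    (h : ∀ c, ν (Ici c) ≤ ν A ↔ d ≤ c) : ehrhard1D ν 1 A = Ici d := by
  have h' : ∀ c, ν {y | c ≤ y} ≤ ν A ↔ d ≤ c := h
  ext t
  simp only [ehrhard1D, one_mul, h', mem_ofPred_eq, mem_Ici]
  exact ⟨fun ht => ht d fun _ => id, fun ht b hb => (hb d le_rfl).trans ht⟩

theorem ehrhard1D_one_Iio_withDensity {F : ℝ → ℝ} (hF : Integrable F) (hpos : ∀ t, 0 < F t)
    {c d : ℝ} (hcd : ∫ t in Ici d, F t = ∫ t in Iio c, F t) :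
    ehrhard1D (volume.withDensity fun t => ENNReal.ofReal (F t)) 1 (Iio c) = Ici d := by
  have hnonneg : ∀ s : Set ℝ, 0 ≤ ∫ t in s, F t := fun s => integral_nonneg fun t => (hpos t).le
  refine ehrhard1D_one_eq_Ici fun b => ?_
  rw [withDensity_apply _ measurableSet_Ici, withDensity_apply _ measurableSet_Iio,
    ← ofReal_integral_eq_lintegral_ofReal hF.integrableOn (.of_forall fun t => (hpos t).le),
    ← ofReal_integral_eq_lintegral_ofReal hF.integrableOn (.of_forall fun t => (hpos t).le),
    ENNReal.ofReal_le_ofReal_iff (hnonneg _), ← hcd]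
  exact (strictAnti_integral_Ici hF hpos).le_iff_ge

theorem prod_add_smul_single {ι M : Type*} [Fintype ι] [DecidableEq ι] [CommMonoid M]
    (F : ι → ℝ → M) (i : ι) (z : EuclideanSpace ℝ ι) (t : ℝ) :
    ∏ j, F j ((z - z i • EuclideanSpace.single i (1 : ℝ) + t • EuclideanSpace.single i (1 : ℝ)) j) =
      (∏ j ∈ Finset.univ.erase i, F j (z j)) * F i t := by
  rw [← Finset.prod_erase_mul _ _ (Finset.mem_univ i)]
  congr 1
  · refine Finset.prod_congr rfl fun j hj => ?_
    simp [Finset.ne_of_mem_erase hj]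
  · simp

theorem ehrhardSymm_single_setOf_lt {n : ℕ} {F : Fin n → ℝ → ℝ} {f : En n → ℝ}
    (hprod : ∀ x : En n, f x = ∏ j, F j (x j)) (hpos : ∀ j t, 0 < F j t)
    {i : Fin n} (hF : Integrable (F i)) {c d : ℝ}
    (hcd : ∫ t in Ici d, F i t = ∫ t in Iio c, F i t) :
    ehrhardSymm f (EuclideanSpace.single i 1) {x | x i < c} = {x | d ≤ x i} := by
  ext z
  have hcoord : ⟪z, EuclideanSpace.single i (1 : ℝ)⟫ = z i := by
    simp [EuclideanSpace.inner_single_right]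
  have hfiber : {t : ℝ | (z - z i • EuclideanSpace.single i (1 : ℝ) +
      t • EuclideanSpace.single i (1 : ℝ)) i < c} = Iio c := by
    ext t; simp
  have hK : 0 < ∏ j ∈ Finset.univ.erase i, F j (z j) := Finset.prod_pos fun j _ => hpos j _
  simp only [ehrhardSymm, fiberMeasure, mem_ofPred_eq, hcoord, hprod, prod_add_smul_single]
  rw [hfiber, ehrhard1D_one_Iio_withDensity (hF.const_mul _) (fun t => mul_pos hK (hpos i t))
    (by rw [integral_const_mul, integral_const_mul, hcd]), mem_Ici]

/-! ### Integrals of product functions -/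

section Products

variable {ι : Type*} [Fintype ι]

theorem integral_euclideanSpace_prod (H : ι → ℝ → ℝ) :
    ∫ x : EuclideanSpace ℝ ι, ∏ j, H j (x j) = ∏ j, ∫ t, H j t := by
  rw [← integral_fintype_prod_volume_eq_prod]
  exact (PiLp.volume_preserving_ofLp ι).integral_comp
    (MeasurableEquiv.toLp 2 (ι → ℝ)).symm.measurableEmbedding fun y : ι → ℝ => ∏ j, H j (y j)

/-- The Bochner integral of a non-integrable factor would be `0`. -/
theorem integrable_factor_of_integral_prod_ne_zero {H : ι → ℝ → ℝ}
    (h : ∫ x : EuclideanSpace ℝ ι, ∏ j, H j (x j) ≠ 0) (i : ι) : Integrable (H i) := by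
  rw [integral_euclideanSpace_prod, Finset.prod_ne_zero_iff] at h
  exact .of_integral_ne_zero (h i (Finset.mem_univ i))

variable [DecidableEq ι]

/-- The total mass of the product of the factors other than the `i`-th one; the product density
has integral `H i c * sideMass H i` over the hyperplane `xᵢ = c`. -/
def sideMass (H : ι → ℝ → ℝ) (i : ι) : ℝ :=
  ∏ j ∈ Finset.univ.erase i, ∫ t, H j t

theorem sideMass_pos {H : ι → ℝ → ℝ} (hH : ∀ j, Integrable (H j)) (hpos : ∀ j t, 0 < H j t)
    (i : ι) : 0 < sideMass H i :=
  Finset.prod_pos fun j _ => integral_pos_of_pos (hH j) (hpos j) (NeZero.ne volume)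

theorem integral_coord_mul_prod (H : ι → ℝ → ℝ) (i : ι) (g : ℝ → ℝ) :
    ∫ x : EuclideanSpace ℝ ι, g (x i) * ∏ j, H j (x j) = (∫ t, g t * H i t) * sideMass H i := by
  set H' := Function.update H i fun t => g t * H i t
  have hself : H' i = fun t => g t * H i t := Function.update_self ..
  have hside : ∀ j ∈ Finset.univ.erase i, H' j = H j := fun j hj =>
    Function.update_of_ne (Finset.ne_of_mem_erase hj) ..
  have hprod : ∀ x : EuclideanSpace ℝ ι, g (x i) * ∏ j, H j (x j) = ∏ j, H' j (x j) := fun x => by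
    rw [← Finset.mul_prod_erase _ _ (Finset.mem_univ i),
      ← Finset.mul_prod_erase _ _ (Finset.mem_univ i), hself, ← mul_assoc]
    exact congrArg _ (Finset.prod_congr rfl fun j hj => by rw [hside j hj])
  simp_rw [hprod]
  rw [integral_euclideanSpace_prod, ← Finset.mul_prod_erase _ _ (Finset.mem_univ i), hself,
    Finset.prod_congr rfl fun j hj => by rw [hside j hj], sideMass]

end Products

/-! ### The weighted divergence -/

section WeightedDiv

variable {n : ℕ} {φ : En n → En n}

theorem dvg_smul {u : En n → ℝ} {x : En n} (hu : DifferentiableAt ℝ u x)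
    (hφ : DifferentiableAt ℝ φ x) :
    dvg (fun y => u y • φ y) x = u x * dvg φ x + fderiv ℝ u x (φ x) := by
  have hdir : ∑ i, fderiv ℝ u x (EuclideanSpace.single i 1) * φ x i = fderiv ℝ u x (φ x) := by
    conv_rhs => rw [← (EuclideanSpace.basisFun (Fin n) ℝ).sum_repr (φ x), map_sum]
    simp [mul_comm]
  simp only [dvg, fderiv_fun_smul hu hφ, ← hdir, Finset.mul_sum, ← Finset.sum_add_distrib]
  simp

theorem dvg_neg (φ : En n → En n) (x : En n) : dvg (fun y => -φ y) x = -dvg φ x := by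
  simp [dvg, fderiv_fun_neg]

theorem continuous_dvg (hφ : ContDiff ℝ 1 φ) : Continuous (dvg φ) := by
  have := hφ.continuous_fderiv one_ne_zero
  unfold dvg
  fun_prop

theorem hasCompactSupport_dvg (hφ : HasCompactSupport φ) : HasCompactSupport (dvg φ) :=
  (hφ.fderiv (𝕜 := ℝ)).comp_left
    (g := fun L : En n →L[ℝ] En n => ∑ i, L (EuclideanSpace.single i 1) i) (by simp)

/-- The divergence of `f φ`, for a density `f` with weak gradient `f'`. -/
def weightedDiv (f : En n → ℝ) (f' φ : En n → En n) (x : En n) : ℝ :=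
  f x * dvg φ x + ⟪φ x, f' x⟫

variable {f : En n → ℝ} {f' : En n → En n}

theorem weightedDiv_neg (f : En n → ℝ) (f' φ : En n → En n) (x : En n) :
    weightedDiv f f' (fun y => -φ y) x = -weightedDiv f f' φ x := by
  simp only [weightedDiv, dvg_neg, inner_neg_left]
  ring

theorem weightedDiv_smul {u : En n → ℝ} {x : En n} (hu : DifferentiableAt ℝ u x)
    (hφ : DifferentiableAt ℝ φ x) :
    weightedDiv f f' (fun y => u y • φ y) x =
      u x * weightedDiv f f' φ x + f x * fderiv ℝ u x (φ x) := by
  simp only [weightedDiv, dvg_smul hu hφ, real_inner_smul_left]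
  ring

theorem integrable_mul_dvg (hf : LocallyIntegrable f) (hφ : ContDiff ℝ 1 φ)
    (hc : HasCompactSupport φ) : Integrable fun x => f x * dvg φ x :=
  hf.integrable_smul_right_of_hasCompactSupport (continuous_dvg hφ) (hasCompactSupport_dvg hc)

theorem integrable_inner_of_hasCompactSupport (hf' : LocallyIntegrable f') (hφ : Continuous φ)
    (hc : HasCompactSupport φ) : Integrable fun x => ⟪φ x, f' x⟫ := by
  have hnorm : LocallyIntegrable fun x => ‖f' x‖ := fun x =>
    let ⟨s, hs, hint⟩ := hf' x
    ⟨s, hs, hint.norm⟩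
  refine (hnorm.integrable_smul_left_of_hasCompactSupport hφ.norm hc.norm).mono
    (hφ.aestronglyMeasurable.inner hf'.aestronglyMeasurable) (.of_forall fun x => ?_)
  simpa using norm_inner_le_norm (𝕜 := ℝ) (φ x) (f' x)

theorem HasWeakGrad.integrable_weightedDiv (hf : HasWeakGrad f f') (hφ : ContDiff ℝ 1 φ)
    (hc : HasCompactSupport φ) : Integrable (weightedDiv f f' φ) :=
  (integrable_mul_dvg hf.1 hφ hc).add
    (integrable_inner_of_hasCompactSupport hf.2.1 hφ.continuous hc)

theorem HasWeakGrad.integral_weightedDiv (hf : HasWeakGrad f f') (hφ : ContDiff ℝ 1 φ)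
    (hc : HasCompactSupport φ) : ∫ x, weightedDiv f f' φ x = 0 := by
  simp only [weightedDiv]
  rw [integral_add (integrable_mul_dvg hf.1 hφ hc)
    (integrable_inner_of_hasCompactSupport hf.2.1 hφ.continuous hc), hf.2.2 φ hφ hc, neg_add_cancel]

theorem HasWeakGrad.integral_mul_weightedDiv (hf : HasWeakGrad f f') {u : En n → ℝ}
    (hu : ContDiff ℝ 1 u) (hφ : ContDiff ℝ 1 φ) (hc : HasCompactSupport φ) :
    ∫ x, u x * weightedDiv f f' φ x = -∫ x, f x * fderiv ℝ u x (φ x) := by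
  have huφ : ContDiff ℝ 1 fun x => u x • φ x := hu.smul hφ
  have huφc : HasCompactSupport fun x => u x • φ x := HasCompactSupport.smul_left (f := u) hc
  have hsupport : HasCompactSupport fun x => fderiv ℝ u x (φ x) :=
    hc.mono <| Function.support_subset_iff'.2 fun x hx => by
      rw [Function.notMem_support.1 hx, map_zero]
  have hflux : Integrable fun x => f x * fderiv ℝ u x (φ x) :=
    hf.1.integrable_smul_right_of_hasCompactSupport
      ((hu.continuous_fderiv one_ne_zero).clm_apply hφ.continuous) hsupport
  have hproduct : ∀ x, u x * weightedDiv f f' φ x =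
      weightedDiv f f' (fun x => u x • φ x) x - f x * fderiv ℝ u x (φ x) := fun x =>
    eq_sub_of_add_eq (weightedDiv_smul (hu.differentiable one_ne_zero x)
      (hφ.differentiable one_ne_zero x)).symm
  simp only [hproduct]
  rw [integral_sub (hf.integrable_weightedDiv huφ huφc) hflux, hf.integral_weightedDiv huφ huφc,
    zero_sub]

theorem perim_eq_iSup_setIntegral {E : Set (En n)} (hE : MeasurableSet E) :
    perim f f' univ E = ⨆ (φ : En n → En n) (_ : IsTestField univ φ),
      ENNReal.ofReal (∫ x in E, weightedDiv f f' φ x) := by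
  have hindicator : ∀ φ : En n → En n, ∀ x, E.indicator (fun _ => (1 : ℝ)) x *
      (f x * dvg φ x + ⟪φ x, f' x⟫) = E.indicator (weightedDiv f f' φ) x := fun φ x => by
    by_cases hx : x ∈ E <;> simp [hx, weightedDiv]
  simp only [perim, bvVar, Measure.restrict_univ, hindicator, integral_indicator hE]

theorem IsTestField.neg {U : Set (En n)} (hφ : IsTestField U φ) :
    IsTestField U fun x => -φ x := by
  obtain ⟨hsmooth, hc, hU, hnorm⟩ := hφ
  exact ⟨hsmooth.neg, hc.neg, (tsupport_neg φ).trans_subset hU,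
    fun x => (norm_neg _).trans_le (hnorm x)⟩

/-- The integral of `div (f φ)` over the whole space vanishes, so the pairings of `E` and of its
complement with `φ` are opposite. -/
theorem perim_compl_le (hf : HasWeakGrad f f') {E : Set (En n)} (hE : MeasurableSet E) :
    perim f f' univ Eᶜ ≤ perim f f' univ E := by
  rw [perim_eq_iSup_setIntegral hE, perim_eq_iSup_setIntegral hE.compl]
  refine iSup₂_le fun φ hφ => le_iSup₂_of_le _ hφ.neg (le_of_eq ?_)
  have hsum := integral_add_compl hE (hf.integrable_weightedDiv hφ.1 hφ.2.1)
  rw [hf.integral_weightedDiv hφ.1 hφ.2.1] at hsum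
  simp only [weightedDiv_neg, integral_neg]
  congr 1
  linarith

theorem perim_compl (hf : HasWeakGrad f f') {E : Set (En n)} (hE : MeasurableSet E) :
    perim f f' univ Eᶜ = perim f f' univ E :=
  (perim_compl_le hf hE).antisymm (by simpa using perim_compl_le hf hE.compl)

end WeightedDiv

/-! ### Smooth approximation of the indicator of a half-line -/

section SmoothStep

/-- A smooth probability density supported in `[0, 2]`. -/
def peak : ℝ → ℝ :=
  ContDiffBump.normed (c := 1)
    { rIn := 1 / 2, rOut := 1, rIn_pos := by norm_num, rIn_lt_rOut := by norm_num } volume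

theorem continuous_peak : Continuous peak := ContDiffBump.continuous_normed _

theorem peak_nonneg (s : ℝ) : 0 ≤ peak s := ContDiffBump.nonneg_normed _ s

theorem hasCompactSupport_peak : HasCompactSupport peak := ContDiffBump.hasCompactSupport_normed _

theorem integrable_peak : Integrable peak :=
  continuous_peak.integrable_of_hasCompactSupport hasCompactSupport_peak

theorem integral_peak : ∫ s, peak s = 1 := ContDiffBump.integral_normed _

theorem integral_Ici_peak_of_nonpos {a : ℝ} (ha : a ≤ 0) : ∫ s in Ici a, peak s = 1 := by
  rw [setIntegral_eq_integral_of_forall_compl_eq_zero, integral_peak]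
  intro s hs
  refine Function.notMem_support.1 fun hmem => hs ?_
  rw [peak, ContDiffBump.support_normed_eq, Real.ball_eq_Ioo, mem_Ioo] at hmem
  rw [mem_Ici]
  linarith [hmem.1]

/-- The rescaled density `peak`, concentrated on the layer `[c - 2 / k, c]`. -/
def layer (c k t : ℝ) : ℝ := k * peak (k * (c - t))

theorem continuous_layer (c k : ℝ) : Continuous (layer c k) := by
  have := continuous_peak
  unfold layer
  fun_prop

theorem layer_nonneg (c : ℝ) {k : ℝ} (hk : 0 ≤ k) (t : ℝ) : 0 ≤ layer c k t :=
  mul_nonneg hk (peak_nonneg _)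

theorem exists_norm_layer_le (c k : ℝ) : ∃ C, ∀ t, ‖layer c k t‖ ≤ C := by
  obtain ⟨B, hB⟩ := hasCompactSupport_peak.exists_bound_of_continuous continuous_peak
  refine ⟨‖k‖ * B, fun t => ?_⟩
  rw [layer, norm_mul]
  gcongr
  exact hB _

theorem tendsto_integral_layer_mul {g : ℝ → ℝ} {c : ℝ} (hg : Integrable g)
    (hc : ContinuousAt g c) :
    Tendsto (fun k => ∫ t, layer c k t * g t) atTop (𝓝 (g c)) := by
  have hdecay : Tendsto (fun x : ℝ => ‖x‖ ^ Module.finrank ℝ ℝ * peak x) (Bornology.cobounded ℝ)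
      (𝓝 0) := by
    refine tendsto_const_nhds.congr' ?_
    filter_upwards [hasCompactSupport_peak.isCompact.isBounded] with x hx
    rw [image_eq_zero_of_notMem_tsupport hx, mul_zero]
  simpa [layer] using
    tendsto_integral_comp_smul_smul_of_integrable' peak_nonneg integral_peak hdecay hg hc

theorem tendsto_integral_layer_mul_prod {ι : Type*} [Fintype ι] [DecidableEq ι] {H : ι → ℝ → ℝ}
    {i : ι} {c : ℝ} (hH : Integrable (H i)) (hc : ContinuousAt (H i) c) :
    Tendsto (fun k => ∫ x : EuclideanSpace ℝ ι, layer c k (x i) * ∏ j, H j (x j)) atTop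
      (𝓝 (H i c * sideMass H i)) := by
  simp only [integral_coord_mul_prod]
  exact (tendsto_integral_layer_mul hH hc).mul_const _

/-- A smooth approximation of the indicator function of `[c, ∞)`, rising on the layer
`[c - 2 / k, c]`. -/
def smoothStep (c k t : ℝ) : ℝ := ∫ s in Ici (k * (c - t)), peak s

theorem hasDerivAt_smoothStep (c k t : ℝ) : HasDerivAt (smoothStep c k) (layer c k t) t := by
  have hinner : HasDerivAt (fun t => k * (c - t)) (-k) t := by
    simpa using ((hasDerivAt_id' t).const_sub c).const_mul k
  have h := (hasDerivAt_integral_Ici continuous_peak integrable_peak (k * (c - t))).comp t hinner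
  rwa [neg_mul_neg, mul_comm] at h

theorem contDiff_smoothStep (c k : ℝ) : ContDiff ℝ 1 (smoothStep c k) := by
  have hderiv : deriv (smoothStep c k) = layer c k :=
    funext fun t => (hasDerivAt_smoothStep c k t).deriv
  exact contDiff_one_iff_deriv.2 ⟨fun t => (hasDerivAt_smoothStep c k t).differentiableAt,
    hderiv ▸ continuous_layer c k⟩

theorem norm_smoothStep_le_one (c k t : ℝ) : ‖smoothStep c k t‖ ≤ 1 := by
  rw [smoothStep, Real.norm_of_nonneg (integral_nonneg peak_nonneg), ← integral_peak]
  exact setIntegral_le_integral integrable_peak (.of_forall peak_nonneg)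

theorem tendsto_smoothStep (c t : ℝ) :
    Tendsto (fun k => smoothStep c k t) atTop (𝓝 ((Ici c).indicator 1 t)) := by
  by_cases h : c ≤ t
  · rw [indicator_of_mem (mem_Ici.2 h)]
    refine tendsto_const_nhds.congr' ?_
    filter_upwards [eventually_ge_atTop 0] with k hk
    exact (integral_Ici_peak_of_nonpos (mul_nonpos_of_nonneg_of_nonpos hk (sub_nonpos.2 h))).symm
  · rw [indicator_of_notMem (notMem_Ici.2 (not_le.1 h))]
    exact tendsto_integral_Ici_zero (tendsto_id.atTop_mul_const (sub_pos.2 (not_le.1 h)))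

end SmoothStep

/-! ### The weighted perimeter of coordinate half-spaces -/

section HalfSpace

variable {n : ℕ} {F : Fin n → ℝ → ℝ} {f : En n → ℝ} {f' : En n → En n} {i : Fin n} {c : ℝ}

theorem contDiff_coord (i : Fin n) : ContDiff ℝ 1 fun x : En n => x i := by
  fun_prop

theorem measurableSet_setOf_le_coord (i : Fin n) (c : ℝ) : MeasurableSet {x : En n | c ≤ x i} :=
  measurableSet_le measurable_const (contDiff_coord i).continuous.measurable

theorem fderiv_smoothStep_coord (i : Fin n) (c k : ℝ) (x v : En n) :
    fderiv ℝ (fun x : En n => smoothStep c k (x i)) x v = layer c k (x i) * v i := by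
  have hcoord : HasFDerivAt (fun x : En n => x i) (EuclideanSpace.proj i : En n →L[ℝ] ℝ) x :=
    (EuclideanSpace.proj i : En n →L[ℝ] ℝ).hasFDerivAt
  have hcomp := (hasDerivAt_smoothStep c k (x i)).comp_hasFDerivAt x hcoord
  have hderiv : HasFDerivAt (fun x : En n => smoothStep c k (x i)) _ x := hcomp
  rw [hderiv.fderiv]
  simp

/-- The limit of the fluxes of `f φ` through thin layers replaces the integral of the trace of `f φ`
on the hyperplane `xᵢ = c`. -/
theorem HasWeakGrad.tendsto_integral_layer (hf : HasWeakGrad f f') {φ : En n → En n}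
    (hφ : ContDiff ℝ 1 φ) (hφc : HasCompactSupport φ) (i : Fin n) (c : ℝ) :
    Tendsto (fun k => -∫ x, f x * (layer c k (x i) * φ x i)) atTop
      (𝓝 (∫ x in {x : En n | c ≤ x i}, weightedDiv f f' φ x)) := by
  have hint := hf.integrable_weightedDiv hφ hφc
  have hstep : ∀ k, ContDiff ℝ 1 fun x : En n => smoothStep c k (x i) := fun k =>
    (contDiff_smoothStep c k).comp (contDiff_coord i)
  have hflux : ∀ k, ∫ x, smoothStep c k (x i) * weightedDiv f f' φ x =
      -∫ x, f x * (layer c k (x i) * φ x i) := fun k => by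
    rw [hf.integral_mul_weightedDiv (hstep k) hφ hφc]
    simp only [fderiv_smoothStep_coord]
  simp only [← hflux, ← integral_indicator (measurableSet_setOf_le_coord i c)]
  refine tendsto_integral_filter_of_dominated_convergence (fun x => ‖weightedDiv f f' φ x‖)
    (.of_forall fun k => (hstep k).continuous.aestronglyMeasurable.mul hint.aestronglyMeasurable)
    (.of_forall fun k => .of_forall fun x => ?_) hint.norm (.of_forall fun x => ?_)
  · rw [norm_mul]
    exact mul_le_of_le_one_left (norm_nonneg _) (norm_smoothStep_le_one ..)
  · have h := (tendsto_smoothStep c (x i)).mul_const (weightedDiv f f' φ x)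
    by_cases hx : c ≤ x i <;> simpa [hx] using h

theorem integral_layer_flux_le (hf : Integrable f) (hnonneg : ∀ x, 0 ≤ f x) {φ : En n → En n}
    (hφ : ∀ x, ‖φ x‖ ≤ 1) (i : Fin n) (c : ℝ) {k : ℝ} (hk : 0 ≤ k) :
    -∫ x, f x * (layer c k (x i) * φ x i) ≤ ∫ x, layer c k (x i) * f x := by
  obtain ⟨C, hC⟩ := exists_norm_layer_le c k
  have hint : Integrable fun x => layer c k (x i) * f x :=
    hf.bdd_mul ((continuous_layer c k).comp (contDiff_coord i).continuous).aestronglyMeasurable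
      (.of_forall fun x => hC (x i))
  rw [← integral_neg]
  refine (Real.le_norm_self _).trans (norm_integral_le_of_norm_le hint (.of_forall fun x => ?_))
  have hcoord : ‖φ x i‖ ≤ 1 := (PiLp.norm_apply_le (φ x) i).trans (hφ x)
  rw [norm_neg, norm_mul, norm_mul, Real.norm_of_nonneg (hnonneg x),
    Real.norm_of_nonneg (layer_nonneg c hk (x i)), ← mul_assoc, mul_comm (f x)]
  exact mul_le_of_le_one_right (mul_nonneg (layer_nonneg c hk _) (hnonneg x)) hcoord

theorem perim_setOf_le_coord_le (hprod : ∀ x : En n, f x = ∏ j, F j (x j)) (hW : MemW f f')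
    (hF : Integrable (F i)) (hc : ContinuousAt (F i) c) :
    perim f f' univ {x | c ≤ x i} ≤ ENNReal.ofReal (F i c * sideMass F i) := by
  rw [perim_eq_iSup_setIntegral (measurableSet_setOf_le_coord i c)]
  refine iSup₂_le fun φ ⟨hφ, hφc, _, hnorm⟩ => ENNReal.ofReal_le_ofReal ?_
  refine le_of_tendsto_of_tendsto (hW.2.2.tendsto_integral_layer hφ hφc i c)
    (tendsto_integral_layer_mul_prod hF hc) ?_
  filter_upwards [eventually_ge_atTop 0] with k hk
  simpa only [← hprod] using integral_layer_flux_le hW.2.1 hW.1 hnorm i c hk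

/-- Smooth cutoffs on `ℝ`, equal to `1` on `[-(R + 1), R + 1]`. -/
def cut (R : ℕ) : ContDiffBump (0 : ℝ) where
  rIn := R + 1
  rOut := R + 2
  rIn_pos := by positivity
  rIn_lt_rOut := by linarith

theorem tendsto_cut (t : ℝ) : Tendsto (fun R => cut R t) atTop (𝓝 1) := by
  refine tendsto_const_nhds.congr' ?_
  filter_upwards [eventually_ge_atTop ⌈|t|⌉₊] with R hR
  have ht : |t| ≤ R + 1 := (Nat.ceil_le.1 hR).trans (by linarith)
  exact ((cut R).one_of_mem_closedBall (mem_closedBall_zero_iff.2 ht)).symm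

theorem norm_cut_le_one (R : ℕ) (t : ℝ) : ‖cut R t‖ ≤ 1 :=
  (Real.norm_of_nonneg (cut R).nonneg).trans_le (cut R).le_one

theorem integrable_mul_cut {g : ℝ → ℝ} (hg : Integrable g) (R : ℕ) :
    Integrable fun t => g t * cut R t :=
  hg.mul_bdd (cut R).continuous.aestronglyMeasurable (.of_forall (norm_cut_le_one R))

theorem tendsto_integral_mul_cut {g : ℝ → ℝ} (hg : Integrable g) :
    Tendsto (fun R => ∫ t, g t * cut R t) atTop (𝓝 (∫ t, g t)) := by
  refine tendsto_integral_of_dominated_convergence (fun t => ‖g t‖)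
    (fun R => (integrable_mul_cut hg R).aestronglyMeasurable) hg.norm
    (fun R => .of_forall fun t => ?_) (.of_forall fun t => ?_)
  · rw [norm_mul]
    exact mul_le_of_le_one_right (norm_nonneg _) (norm_cut_le_one R t)
  · simpa using (tendsto_cut t).const_mul (g t)

theorem hasCompactSupport_prod_coord {ι : Type*} [Fintype ι] {g : ι → ℝ → ℝ}
    (hg : ∀ j, HasCompactSupport (g j)) :
    HasCompactSupport fun x : EuclideanSpace ℝ ι => ∏ j, g j (x j) := by
  refine HasCompactSupport.intro
    ((isCompact_univ_pi fun j => (hg j).isCompact).image (PiLp.continuous_toLp 2 _)) fun x hx => ?_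
  obtain ⟨j, hj⟩ : ∃ j, x j ∉ tsupport (g j) := by
    by_contra! h
    exact hx ⟨x.ofLp, fun j _ => h j, rfl⟩
  exact Finset.prod_eq_zero (Finset.mem_univ j) (image_eq_zero_of_notMem_tsupport hj)

/-- Test fields converging to the constant field `-eᵢ`, the outer normal of `{c ≤ xᵢ}`, as
`R → ∞`. -/
def cutField (i : Fin n) (R : ℕ) (x : En n) : En n :=
  (∏ j, cut R (x j)) • EuclideanSpace.single i (-1 : ℝ)

theorem isTestField_cutField (i : Fin n) (R : ℕ) : IsTestField univ (cutField i R) := by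
  have hsmooth : ContDiff ℝ 1 fun x : En n => ∏ j, cut R (x j) :=
    contDiff_prod fun j _ => (cut R).contDiff.comp (contDiff_coord j)
  have hsupport : HasCompactSupport fun x : En n => ∏ j, cut R (x j) :=
    hasCompactSupport_prod_coord fun _ => (cut R).hasCompactSupport
  refine ⟨hsmooth.smul contDiff_const, hsupport.smul_right, subset_univ _, fun x => ?_⟩
  rw [cutField, norm_smul, PiLp.norm_single, norm_neg, norm_one, mul_one, norm_prod]
  exact Finset.prod_le_one (fun j _ => norm_nonneg _) fun j _ => norm_cut_le_one R (x j)

theorem integral_weightedDiv_cutField (hprod : ∀ x : En n, f x = ∏ j, F j (x j))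
    (hf : HasWeakGrad f f') (hF : Integrable (F i)) (hc : ContinuousAt (F i) c) (R : ℕ) :
    ∫ x in {x : En n | c ≤ x i}, weightedDiv f f' (cutField i R) x =
      F i c * cut R c * sideMass (fun j t => F j t * cut R t) i := by
  have htest := isTestField_cutField i R
  have hflux : ∀ k, -∫ x, f x * (layer c k (x i) * cutField i R x i) =
      ∫ x : En n, layer c k (x i) * ∏ j, F j (x j) * cut R (x j) := fun k => by
    rw [← integral_neg]
    refine integral_congr_ae (.of_forall fun x => ?_)
    simp only [cutField, Finset.prod_mul_distrib, hprod, PiLp.smul_apply, PiLp.single_apply,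
      if_true, smul_eq_mul]
    ring
  have hlim := hf.tendsto_integral_layer htest.1 htest.2.1 i c
  simp only [hflux] at hlim
  exact tendsto_nhds_unique hlim <| tendsto_integral_layer_mul_prod
    (H := fun j t => F j t * cut R t) (integrable_mul_cut hF R)
    (hc.mul (cut R).continuous.continuousAt)

theorem le_perim_setOf_le_coord (hprod : ∀ x : En n, f x = ∏ j, F j (x j))
    (hf : HasWeakGrad f f') (hF : ∀ j, Integrable (F j)) (hc : ContinuousAt (F i) c) :
    ENNReal.ofReal (F i c * sideMass F i) ≤ perim f f' univ {x | c ≤ x i} := by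
  have hlim : Tendsto (fun R => F i c * cut R c * sideMass (fun j t => F j t * cut R t) i) atTop
      (𝓝 (F i c * sideMass F i)) := by
    have h := (tendsto_cut c).const_mul (F i c)
    rw [mul_one] at h
    exact h.mul (tendsto_finsetProd _ fun j _ => tendsto_integral_mul_cut (hF j))
  refine le_of_tendsto' (ENNReal.tendsto_ofReal hlim) fun R => ?_
  rw [perim_eq_iSup_setIntegral (measurableSet_setOf_le_coord i c),
    ← integral_weightedDiv_cutField hprod hf (hF i) hc R]
  exact le_iSup₂_of_le (cutField i R) (isTestField_cutField i R) le_rfl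

theorem perim_setOf_le_coord (hprod : ∀ x : En n, f x = ∏ j, F j (x j)) (hW : MemW f f')
    (hF : ∀ j, Integrable (F j)) (hc : ContinuousAt (F i) c) :
    perim f f' univ {x | c ≤ x i} = ENNReal.ofReal (F i c * sideMass F i) :=
  (perim_setOf_le_coord_le hprod hW (hF i) hc).antisymm
    (le_perim_setOf_le_coord hprod hW.2.2 hF hc)

theorem perim_setOf_coord_lt (hprod : ∀ x : En n, f x = ∏ j, F j (x j)) (hW : MemW f f')
    (hF : ∀ j, Integrable (F j)) (hc : ContinuousAt (F i) c) :
    perim f f' univ {x | x i < c} = ENNReal.ofReal (F i c * sideMass F i) := by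
  rw [← perim_setOf_le_coord hprod hW hF hc,
    ← perim_compl hW.2.2 (measurableSet_setOf_le_coord i c)]
  congr 1
  ext x
  simp

end HalfSpace

theorem product_ps_measure_symmetric_general {n : ℕ} (F : Fin n → ℝ → ℝ)
    (f : En n → ℝ) (f' : En n → En n) (hprod : ∀ x : En n, f x = ∏ j, F j (x j))
    (hW : MemW f f') (hpos : ∀ j t, 0 < F j t) (i : Fin n) (hcont : Continuous (F i))
    (hPS : ∀ c, perim f f' univ {x | x i < c} < ⊤ →
      perim f f' univ (ehrhardSymm f (EuclideanSpace.single i 1) {x | x i < c}) ≤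
        perim f f' univ {x | x i < c}) :
    ∃ m : ℝ, ∀ t : ℝ, F i (m - t) = F i (m + t) := by
  have hf : 0 < ∫ x, f x := integral_pos_of_pos hW.2.1
    (fun x => hprod x ▸ Finset.prod_pos fun j _ => hpos j _) (NeZero.ne volume)
  have hF : ∀ j, Integrable (F j) :=
    integrable_factor_of_integral_prod_ne_zero (by simpa only [← hprod] using hf.ne')
  have hside : 0 < sideMass F i := sideMass_pos hF hpos i
  refine exists_symmetric_of_tails hcont (hF i) (hpos i) fun c d hcd => ?_
  have hperim := hPS c (by
    rw [perim_setOf_coord_lt hprod hW hF hcont.continuousAt]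
    exact ENNReal.ofReal_lt_top)
  rw [ehrhardSymm_single_setOf_lt hprod hpos (hF i) hcd,
    perim_setOf_le_coord hprod hW hF hcont.continuousAt,
    perim_setOf_coord_lt hprod hW hF hcont.continuousAt,
    ENNReal.ofReal_le_ofReal_iff (mul_nonneg (hpos i c).le hside.le)] at hperim
  exact le_of_mul_le_mul_right hperim hside

/-- If a PS measure `μ ∈ 𝒲(ℝⁿ)` is a product measure `μ₁ × ⋯ × μₙ` with continuous,
strictly positive one-dimensional densities `fᵢ`, then each `fᵢ` is symmetric. -/
theorem product_ps_measure_symmetric {n : ℕ} (F : Fin n → ℝ → ℝ)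
    (f : En n → ℝ) (f' : En n → En n)
    (hprod : ∀ x : En n, f x = ∏ i, F i (x i))
    (hW : MemW f f') (hPS : IsPSMeasure f f')
    (hcont : ∀ i, Continuous (F i)) (hpos : ∀ i t, 0 < F i t) :
    ∀ i : Fin n, ∃ m : ℝ, ∀ t : ℝ, F i (m - t) = F i (m + t) := fun i =>
  product_ps_measure_symmetric_general F f f' hprod hW hpos i (hcont i) fun _ =>
    hPS _ (by simp) _ (measurableSet_lt (by fun_prop) measurable_const).nullMeasurableSet

end
end

section
/- Let μ = f·L¹ with f ∈ L¹(ℝ) and f ≥ 0. Let E ⊆ ℝ be Lebesgue-measurable and suppose the interval (a, b) satisfies μ(Eᶜ ∩ (a, b)) = α and μ(E ∩ [b, ∞)) = β. Then μ(S_{−1}(E) ∩ [b, ∞)) ≤ max{β − α, 0}; equivalently, μ(S_{−1}(E) ∖ (−∞, b]) ≤ μ(E ∖ (−∞, b]) − min{α, β}. In particular: (1) μ(S_{−1}(E) ∖ (−∞, b]) ≤ μ(E ∖ (−∞, b]); and (2) if there exist x > y and r > 0 with (x − r, x + r) ∩ (y − r, y + r) = ∅, μ(E ∩ (x − r, x +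 r)) > 0, and μ(Eᶜ ∩ (y − r, y + r)) > 0, then μ(S_{−1}(E) ∖ (−∞, b]) < μ(E ∖ (−∞, b]) for every b with y + r < b < x − r. -/
/-!
The symmetrized set `S` is a down-set, and `μ S ≤ μ E` because each half-line strictly inside `S`
has mass at most `μ E` and points are null. If `S` misses `[b, ∞)` there is nothing to prove. Else
`(-∞, b) ⊆ S`, so all the mass that `E` lacks to the left of `b` is present in `S` and has to be
paid for on the right:
`μ (S ∩ [b, ∞)) = μ S - μ (-∞, b) ≤ μ E - μ (-∞, b) = μ (E ∩ [b, ∞)) - μ (Eᶜ ∩ (-∞, b))`.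
-/

open MeasureTheory Set Filter
open scoped ENNReal Topology

noncomputable section

/-- The weighted variation `‖g‖_{BV_ν(ℝ)}` for `ν = f·L¹` with weak derivative `f'`. -/
noncomputable def bvVar1 (f f' : ℝ → ℝ) (g : ℝ → ℝ) : ℝ≥0∞ :=
  ⨆ (φ : ℝ → ℝ) (_ : ContDiff ℝ 1 φ ∧ HasCompactSupport φ ∧ ∀ x, |φ x| ≤ 1),
    ENNReal.ofReal (∫ x, g x * (f x * deriv φ x + φ x * f' x))

/-- The weighted perimeter `Per_ν(E)`. -/
noncomputable def perim1 (f f' : ℝ → ℝ) (E : Set ℝ) : ℝ≥0∞ :=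
  bvVar1 f f' (E.indicator fun _ => (1 : ℝ))

/-- The measure `ν = f·L¹`. -/
noncomputable def mu1 (f : ℝ → ℝ) : Measure ℝ :=
  volume.withDensity fun x => ENNReal.ofReal (f x)

/-- `ν = f·L¹` is a perimeter symmetrization (PS) measure on `ℝ`. -/
def IsPS1 (f f' : ℝ → ℝ) : Prop :=
  ∀ v : ℝ, (v = 1 ∨ v = -1) → ∀ E : Set ℝ, NullMeasurableSet E volume →
    perim1 f f' E < ⊤ →
      perim1 f f' (ehrhard1D (mu1 f) v E) ≤ perim1 f f' E

section LinearOrder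

variable {α : Type*} [LinearOrder α] [MeasurableSpace α] {ν : Measure α}

theorem measure_sdiff_Iic_eq_measure_inter_Ici (ν : Measure α) [NullSingletonClass ν]
    (A : Set α) (b : α) : ν (A \ Iic b) = ν (A ∩ Ici b) := by
  rw [sdiff_eq, compl_Iic]
  exact measure_congr (EventuallyEq.rfl.inter Ioi_ae_eq_Ici)

variable [TopologicalSpace α] {E S : Set α}

theorem measure_eq_iSup_Iic_of_isLowerSet [OrderTopology α] [SecondCountableTopology α]
    (ν : Measure α) (hS : IsLowerSet S) : ν S = ⨆ t : S, ν (Iic (t : α)) := by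
  have : OrdConnected S := hS.ordConnected
  have hunion : S = ⋃ t : S, Iic (t : α) :=
    Subset.antisymm (fun t ht => mem_iUnion.2 ⟨⟨t, ht⟩, self_mem_Iic⟩)
      (iUnion_subset fun t => hS.Iic_subset t.2)
  have hmono : Monotone fun t : S => Iic (t : α) := fun _ _ h => Iic_subset_Iic.2 h
  conv_lhs => rw [hunion]
  exact hmono.measure_iUnion

-- If `S` has a maximum `t`, then `h` bounds `Iic t` only through `Iio t`, again a lower set.
theorem measure_le_of_isLowerSet [OrderTopology α] [SecondCountableTopology α]
    [NullSingletonClass ν] {m : ℝ≥0∞} (hS : IsLowerSet S)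
    (h : ∀ t ∈ S, ∀ s < t, ν (Iic s) ≤ m) : ν S ≤ m := by
  rw [measure_eq_iSup_Iic_of_isLowerSet ν hS]
  refine iSup_le fun t => ?_
  rw [← measure_congr Iio_ae_eq_Iic, measure_eq_iSup_Iic_of_isLowerSet ν (isLowerSet_Iio _)]
  exact iSup_le fun s => h t t.2 s s.2

variable [ClosedIciTopology α] [OpensMeasurableSpace α]

theorem measure_inter_Ici_le_of_isLowerSet (hS : IsLowerSet S) (hE : NullMeasurableSet E ν)
    (hfin : ν E ≠ ∞) (hSE : ν S ≤ ν E) (b : α) :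
    ν (S ∩ Ici b) ≤ ν (E ∩ Ici b) - ν (Eᶜ ∩ Iio b) := by
  rcases (S ∩ Ici b).eq_empty_or_nonempty with hempty | ⟨t, htS, hbt⟩
  · simp [hempty]
  have hsub : Iio b ⊆ S := fun x hx => hS (hx.le.trans hbt) htS
  have hsplit (A : Set α) : ν (A ∩ Ici b) + ν (A ∩ Iio b) = ν A := by
    rw [← compl_Ici, ← sdiff_eq]
    exact measure_inter_add_sdiff A measurableSet_Ici
  have hIio : ν (Eᶜ ∩ Iio b) + ν (E ∩ Iio b) = ν (Iio b) := by
    rw [add_comm, inter_comm E, inter_comm Eᶜ, ← sdiff_eq]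
    exact measure_inter_add_sdiff₀ _ hE
  have hsum : ν (S ∩ Ici b) + ν (Eᶜ ∩ Iio b) ≤ ν (E ∩ Ici b) := by
    refine (ENNReal.add_le_add_iff_right
      (measure_ne_top_of_subset (inter_subset_left (t := Iio b)) hfin)).1 ?_
    calc ν (S ∩ Ici b) + ν (Eᶜ ∩ Iio b) + ν (E ∩ Iio b)
        = ν (S ∩ Ici b) + ν (S ∩ Iio b) := by rw [add_assoc, hIio, inter_eq_right.2 hsub]
      _ = ν S := hsplit S
      _ ≤ ν E := hSE
      _ = ν (E ∩ Ici b) + ν (E ∩ Iio b) := (hsplit E).symm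
  have hEfin : ν (E ∩ Ici b) ≠ ∞ := measure_ne_top_of_subset inter_subset_left hfin
  exact ENNReal.le_sub_of_add_le_right
    (ne_top_of_le_ne_top hEfin (le_add_self.trans hsum)) hsum

theorem measure_inter_Ici_lt_of_isLowerSet (hS : IsLowerSet S) (hE : NullMeasurableSet E ν)
    (hfin : ν E ≠ ∞) (hSE : ν S ≤ ν E) {b : α} (hright : 0 < ν (E ∩ Ici b))
    (hleft : 0 < ν (Eᶜ ∩ Iio b)) : ν (S ∩ Ici b) < ν (E ∩ Ici b) :=
  (measure_inter_Ici_le_of_isLowerSet hS hE hfin hSE b).trans_lt <|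
    ENNReal.sub_lt_self (measure_ne_top_of_subset inter_subset_left hfin) hright.ne' hleft.ne'

end LinearOrder

section Ehrhard

variable {ν : Measure ℝ} {v : ℝ} {A : Set ℝ}

theorem isLowerSet_ehrhard1D (ν : Measure ℝ) (hv : v ≤ 0) (A : Set ℝ) :
    IsLowerSet (ehrhard1D ν v A) :=
  fun _ _ hst hs b hb => (hs b hb).trans (mul_le_mul_of_nonpos_left hst hv)

theorem measure_halfLine_le_of_mem_ehrhard1D {c t : ℝ} (ht : t ∈ ehrhard1D ν v A)
    (hc : v * t < c) : ν {y | c ≤ v * y} ≤ ν A := by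
  by_contra hlarge
  have hlower (d : ℝ) (hd : ν {y | d ≤ v * y} ≤ ν A) : c ≤ d := by
    by_contra! hdc
    exact hlarge ((measure_mono fun y (hy : c ≤ v * y) => hdc.le.trans hy).trans hd)
  exact (ht c hlower).not_gt hc

theorem measure_ehrhard1D_le (ν : Measure ℝ) [NullSingletonClass ν] (hv : v < 0) (A : Set ℝ) :
    ν (ehrhard1D ν v A) ≤ ν A := by
  refine measure_le_of_isLowerSet (isLowerSet_ehrhard1D ν hv.le A) fun t ht s hst => ?_
  have hIic : Iic s = {y | v * s ≤ v * y} := ext fun y => (mul_le_mul_left_of_neg hv).symm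
  rw [hIic]
  exact measure_halfLine_le_of_mem_ehrhard1D ht (mul_lt_mul_of_neg_left hst hv)

end Ehrhard

theorem one_dimensional_behavior_general {ν : Measure ℝ} [NullSingletonClass ν] {v : ℝ}
    (hv : v < 0) {E : Set ℝ} (hE : NullMeasurableSet E ν) (hfin : ν E ≠ ∞) (a b : ℝ) :
    ν (ehrhard1D ν v E ∩ Ici b) ≤ ν (E ∩ Ici b) - ν (Eᶜ ∩ Ioo a b) ∧
    ν (ehrhard1D ν v E \ Iic b) ≤ ν (E \ Iic b) - min (ν (Eᶜ ∩ Ioo a b)) (ν (E ∩ Ici b)) ∧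
    ν (ehrhard1D ν v E \ Iic b) ≤ ν (E \ Iic b) ∧
    ∀ x y r : ℝ, 0 < ν (E ∩ Ioo (x - r) (x + r)) → 0 < ν (Eᶜ ∩ Ioo (y - r) (y + r)) →
      ∀ b' : ℝ, y + r < b' → b' < x - r → ν (ehrhard1D ν v E \ Iic b') < ν (E \ Iic b') := by
  have hS := isLowerSet_ehrhard1D ν hv.le E
  have hSE := measure_ehrhard1D_le ν hv E
  simp only [measure_sdiff_Iic_eq_measure_inter_Ici]
  have htail : ν (ehrhard1D ν v E ∩ Ici b) ≤ ν (E ∩ Ici b) - ν (Eᶜ ∩ Ioo a b) :=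
    (measure_inter_Ici_le_of_isLowerSet hS hE hfin hSE b).trans
      (tsub_le_tsub_left (measure_mono (inter_subset_inter_right _ Ioo_subset_Iio_self)) _)
  refine ⟨htail, htail.trans (tsub_le_tsub_left (min_le_left _ _) _),
    htail.trans tsub_le_self, fun x y r hx hy b' hyb hbx => ?_⟩
  have hright : Ioo (x - r) (x + r) ⊆ Ici b' := fun z hz => (hbx.trans hz.1).le
  have hleft : Ioo (y - r) (y + r) ⊆ Iio b' := fun z hz => hz.2.trans hyb
  exact measure_inter_Ici_lt_of_isLowerSet hS hE hfin hSE
    (hx.trans_le (measure_mono (inter_subset_inter_right _ hright)))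
    (hy.trans_le (measure_mono (inter_subset_inter_right _ hleft)))

theorem mu1_absolutelyContinuous (f : ℝ → ℝ) : mu1 f ≪ volume :=
  withDensity_absolutelyContinuous _ _

instance instNullSingletonClassMu1 (f : ℝ → ℝ) : NullSingletonClass (mu1 f) :=
  nullSingletonClass_withDensity _

theorem isFiniteMeasure_mu1 {f : ℝ → ℝ} (hf : Integrable f volume) : IsFiniteMeasure (mu1 f) :=
  isFiniteMeasure_withDensity_ofReal hf.hasFiniteIntegral

/-- **One-dimensional behavior** of Ehrhard symmetrization in direction `−1`:
mass control on `[b, ∞)` together with the strict version. -/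
theorem one_dimensional_behavior (f : ℝ → ℝ) (hnonneg : ∀ x, 0 ≤ f x)
    (hint : Integrable f volume)
    (E : Set ℝ) (hE : NullMeasurableSet E volume)
    (a b : ℝ) (hab : a < b) (α β : ℝ≥0∞)
    (hα : mu1 f (Eᶜ ∩ Ioo a b) = α) (hβ : mu1 f (E ∩ Ici b) = β) :
    mu1 f (ehrhard1D (mu1 f) (-1) E ∩ Ici b) ≤ β - α ∧
    mu1 f (ehrhard1D (mu1 f) (-1) E \ Iic b) ≤ mu1 f (E \ Iic b) - min α β ∧
    mu1 f (ehrhard1D (mu1 f) (-1) E \ Iic b) ≤ mu1 f (E \ Iic b) ∧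
    (∀ x y r : ℝ, y < x → 0 < r →
      Disjoint (Ioo (x - r) (x + r)) (Ioo (y - r) (y + r)) →
      0 < mu1 f (E ∩ Ioo (x - r) (x + r)) →
      0 < mu1 f (Eᶜ ∩ Ioo (y - r) (y + r)) →
      ∀ b' : ℝ, y + r < b' → b' < x - r →
        mu1 f (ehrhard1D (mu1 f) (-1) E \ Iic b') < mu1 f (E \ Iic b')) := by
  subst hα hβ
  have := isFiniteMeasure_mu1 hint
  obtain ⟨htail, hmin, hle, hlt⟩ := one_dimensional_behavior_general neg_one_lt_zero
    (hE.mono_ac (mu1_absolutelyContinuous f)) (measure_ne_top _ _) a b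
  exact ⟨htail, hmin, hle, fun x y r _ _ _ => hlt x y r⟩

end
end
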